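/- Let (g,A) be a compatible pair of type 2 over a field k of characteristic 0, i.e. g ≠ A and g + g² = A. Then for every associative k-algebra F one has (g,A)(F) = F ⊗ g + [F,F] ⊗ A + F·[F,F] ⊗ [A,A]. -/

import Mathlib

open Submodule TensorProduct

variable (K : Type*) [Field K]

/-- The span of all products `a * b`, `a ∈ S`, `b ∈ T` (the subspace `S·T`). -/
def pSpan {R : Type*} [NonUnitalRing R] [Module K R] (S T : Submodule K R) : Submodule K R :=
  Submodule.span K {x | ∃ a ∈ S, ∃ b ∈ T, x = a * b}

/-- The span of all commutators `a * b - b * a`, `a ∈ S`, `b ∈ T` (the subspace `[S, T]`). -/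
def bSpan {R : Type*} [NonUnitalRing R] [Module K R] (S T : Submodule K R) : Submodule K R :=
  Submodule.span K {x | ∃ a ∈ S, ∃ b ∈ T, x = a * b - b * a}

/-- The `k`-th commutator space `S^(k)`: `S^(0) = S`, `S^(k) = [S, S^(k-1)]`.
For `S = ⊤` this is the commutator space `F^(k)` of the algebra. -/
def cSp {R : Type*} [NonUnitalRing R] [Module K R] (S : Submodule K R) : ℕ → Submodule K R
  | 0 => S
  | (k+1) => bSpan K S (cSp S k)

/-- `IklS K S ℓ k` is `I_k^ℓ(R, S)`: the sum of `S^(λ₁) ⋯ S^(λ_ℓ)` over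
`λ₁ + ⋯ + λ_ℓ = k`, defined via the recursion `I_k^1 = S^(k)`,
`I_k^ℓ = Σ_{0 ≤ i ≤ k} S^(i) · I_{k-i}^{ℓ-1}`.  The first argument is the
superscript `ℓ`, the second the subscript `k`; the (unused) value at `ℓ = 0` is `⊥`.
For `S = ⊤` this is `I_k^ℓ(F)`. -/
def IklS {R : Type*} [NonUnitalRing R] [Module K R] (S : Submodule K R) :
    ℕ → ℕ → Submodule K R
  | 0, _ => ⊥
  | 1, k => cSp K S k
  | (ℓ+2), k => ∑ i ∈ Finset.range (k+1), pSpan K (cSp K S i) (IklS S (ℓ+1) (k-i))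

/-- `I_k^{≤ℓ}(F) = Σ_{1 ≤ ℓ' ≤ ℓ} I_k^{ℓ'}(F)`. -/
def Ikle {R : Type*} [NonUnitalRing R] [Module K R] (ℓ k : ℕ) : Submodule K R :=
  ∑ ℓ' ∈ Finset.Icc 1 ℓ, IklS K (⊤ : Submodule K R) ℓ' k

/-- `I_k(F) = Σ_{ℓ ≥ 1} I_k^ℓ(F)`. -/
def Ik (R : Type*) [NonUnitalRing R] [Module K R] (k : ℕ) : Submodule K R :=
  ⨆ ℓ : ℕ, IklS K (⊤ : Submodule K R) (ℓ + 1) k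

/-- `g^n`: the span of all products of `n` elements of `g` (set to `⊥` for `n = 0`). -/
def gPow {R : Type*} [NonUnitalRing R] [Module K R] (g : Submodule K R) : ℕ → Submodule K R
  | 0 => ⊥
  | 1 => g
  | (n+2) => pSpan K g (gPow g (n+1))

/-- The Lie subalgebra (under the commutator bracket) generated by a subspace `S`:
the smallest subspace containing `S` and closed under `(x, y) ↦ x * y - y * x`. -/
def lieGen {R : Type*} [NonUnitalRing R] [Module K R] (S : Submodule K R) : Submodule K R :=
  sInf {T | S ≤ T ∧ ∀ x ∈ T, ∀ y ∈ T, x * y - y * x ∈ T}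

/-- The subspace `S ⊗ T` of `F ⊗[K] A`: the span of all pure tensors `f ⊗ a`
with `f ∈ S`, `a ∈ T`. -/
def tSpan {F A : Type*} [AddCommGroup F] [Module K F] [AddCommGroup A] [Module K A]
    (S : Submodule K F) (T : Submodule K A) : Submodule K (F ⊗[K] A) :=
  Submodule.span K {z | ∃ f ∈ S, ∃ a ∈ T, z = f ⊗ₜ[K] a}

/-- The current Lie algebra `(g, A)(F)`: the Lie subalgebra of `F ⊗ A` (with the
commutator bracket) generated by `F ⊗ g`. -/
def currentLie {F A : Type*} [NonUnitalRing F] [Module K F] [SMulCommClass K F F]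
    [IsScalarTower K F F] [Ring A] [Algebra K A] (g : Submodule K A) :
    Submodule K (F ⊗[K] A) :=
  lieGen K (tSpan K (⊤ : Submodule K F) g)

/-! The commutator of two pure tensors is `[f ⊗ a, f' ⊗ a'] = [f, f'] ⊗ a a' + f' f ⊗ [a, a']`.
Reading this identity from left to right shows that `[F, F] ⊗ A + F [F, F] ⊗ [A, A]` is a Lie ideal
of `F ⊗ A`, so that adding `F ⊗ g` to it gives a Lie algebra. Solving it for the first summand, and
then for the second, shows that the Lie algebra generated by `F ⊗ g` contains
`[F, F] ⊗ (g + g²) = [F, F] ⊗ A` and hence `F [F, F] ⊗ [A, g]`. Finally `[A, g] = [A, g + g²]`,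
because `[a, x y] = [a x, y] + [y a, x]`. -/

section Spans

variable {K}
variable {R : Type*} [NonUnitalRing R] [Module K R] {S S' T T' U : Submodule K R}

theorem pSpan_le : pSpan K S T ≤ U ↔ ∀ a ∈ S, ∀ b ∈ T, a * b ∈ U := by
  refine ⟨fun h a ha b hb ↦ h (subset_span ⟨a, ha, b, hb, rfl⟩), fun h ↦ span_le.2 ?_⟩
  rintro _ ⟨a, ha, b, hb, rfl⟩
  exact h a ha b hb

theorem bSpan_le : bSpan K S T ≤ U ↔ ∀ a ∈ S, ∀ b ∈ T, a * b - b * a ∈ U := by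
  refine ⟨fun h a ha b hb ↦ h (subset_span ⟨a, ha, b, hb, rfl⟩), fun h ↦ span_le.2 ?_⟩
  rintro _ ⟨a, ha, b, hb, rfl⟩
  exact h a ha b hb

theorem mul_mem_pSpan {a b : R} (ha : a ∈ S) (hb : b ∈ T) : a * b ∈ pSpan K S T :=
  pSpan_le.1 le_rfl a ha b hb

theorem commutator_mem_bSpan {a b : R} (ha : a ∈ S) (hb : b ∈ T) :
    a * b - b * a ∈ bSpan K S T :=
  bSpan_le.1 le_rfl a ha b hb

theorem bSpan_mono (hS : S ≤ S') (hT : T ≤ T') : bSpan K S T ≤ bSpan K S' T' :=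
  bSpan_le.2 fun _ ha _ hb ↦ commutator_mem_bSpan (hS ha) (hT hb)

theorem bSpan_le_swap (S T : Submodule K R) : bSpan K S T ≤ bSpan K T S :=
  bSpan_le.2 fun a ha b hb ↦ neg_sub (b * a) (a * b) ▸ neg_mem (commutator_mem_bSpan hb ha)

theorem le_lieGen (S : Submodule K R) : S ≤ lieGen K S :=
  le_sInf fun _ hT ↦ hT.1

theorem lieGen_le (hST : S ≤ T) (hT : bSpan K T T ≤ T) : lieGen K S ≤ T :=
  sInf_le ⟨hST, bSpan_le.1 hT⟩

theorem bSpan_lieGen_le (S : Submodule K R) : bSpan K (lieGen K S) (lieGen K S) ≤ lieGen K S :=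
  le_sInf fun _ hT ↦ (bSpan_mono (sInf_le hT) (sInf_le hT)).trans (bSpan_le.2 hT.2)

variable [SMulCommClass K R R]

theorem pSpan_top_pSpan_top_le (S : Submodule K R) :
    pSpan K ⊤ (pSpan K ⊤ S) ≤ pSpan K ⊤ S := by
  refine pSpan_le.2 fun a _ x hx ↦ ?_
  have mul_left_stable : pSpan K ⊤ S ≤ (pSpan K ⊤ S).comap (LinearMap.mulLeft K a) :=
    pSpan_le.2 fun b _ s hs ↦ by
      simpa only [mem_comap, LinearMap.mulLeft_apply, mul_assoc] using
        mul_mem_pSpan (mem_top : a * b ∈ ⊤) hs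
  exact mul_left_stable hx

variable [IsScalarTower K R R]

theorem bSpan_eq_map₂ (S T : Submodule K R) :
    bSpan K S T = map₂ (LinearMap.mul K R - (LinearMap.mul K R).flip) S T :=
  le_antisymm
    (bSpan_le.2 fun _ ha _ hb ↦
      apply_mem_map₂ (LinearMap.mul K R - (LinearMap.mul K R).flip) ha hb)
    (map₂_le.2 fun _ ha _ hb ↦ commutator_mem_bSpan ha hb)

theorem bSpan_span_span_le {s t : Set R} :
    bSpan K (span K s) (span K t) ≤ U ↔ ∀ a ∈ s, ∀ b ∈ t, a * b - b * a ∈ U := by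
  rw [bSpan_eq_map₂, map₂_span_span, span_le, Set.image2_subset_iff]
  rfl

theorem bSpan_sup_left (S S' T : Submodule K R) :
    bSpan K (S ⊔ S') T = bSpan K S T ⊔ bSpan K S' T := by
  simp only [bSpan_eq_map₂, map₂_sup_left]

theorem bSpan_sup_right (S T T' : Submodule K R) :
    bSpan K S (T ⊔ T') = bSpan K S T ⊔ bSpan K S T' := by
  simp only [bSpan_eq_map₂, map₂_sup_right]

theorem bSpan_sup_self_le (hS : bSpan K S S ≤ S ⊔ T) (hT : bSpan K T ⊤ ≤ T) :
    bSpan K (S ⊔ T) (S ⊔ T) ≤ S ⊔ T := by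
  have hTU (U : Submodule K R) : bSpan K T U ≤ S ⊔ T :=
    (bSpan_mono le_rfl le_top).trans (hT.trans le_sup_right)
  rw [bSpan_sup_left, bSpan_sup_right]
  exact sup_le (sup_le hS ((bSpan_le_swap S T).trans (hTU S))) (hTU _)

theorem bSpan_top_pSpan_le (S T : Submodule K R) :
    bSpan K ⊤ (pSpan K S T) ≤ bSpan K ⊤ S ⊔ bSpan K ⊤ T := by
  rw [pSpan, ← span_univ, bSpan_span_span_le, span_univ]
  rintro a - _ ⟨x, hx, y, hy, rfl⟩
  have commutator_mul : a * (x * y) - x * y * a =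
      (y * a * x - x * (y * a)) + (a * x * y - y * (a * x)) := by noncomm_ring
  rw [commutator_mul]
  exact add_mem_sup (commutator_mem_bSpan mem_top hx) (commutator_mem_bSpan mem_top hy)

theorem bSpan_top_sup_pSpan_self (S : Submodule K R) :
    bSpan K ⊤ (S ⊔ pSpan K S S) = bSpan K ⊤ S := by
  rw [bSpan_sup_right, sup_eq_left]
  exact (bSpan_top_pSpan_le S S).trans (sup_idem _).le

end Spans

section TensorSpans

variable {K}
variable {M N : Type*} [AddCommGroup M] [Module K M] [AddCommGroup N] [Module K N]
  {S S' : Submodule K M} {T T' : Submodule K N}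

theorem tSpan_eq_map₂ (S : Submodule K M) (T : Submodule K N) :
    tSpan K S T = map₂ (TensorProduct.mk K M N) S T := by
  rw [map₂_eq_span_image2, tSpan]
  congr 1
  ext z
  simp only [Set.mem_ofPred_eq, Set.mem_image2, SetLike.mem_coe, mk_apply, eq_comm]

theorem tmul_mem_tSpan {m : M} {n : N} (hm : m ∈ S) (hn : n ∈ T) : m ⊗ₜ[K] n ∈ tSpan K S T :=
  subset_span ⟨m, hm, n, hn, rfl⟩

theorem tSpan_mono (hS : S ≤ S') (hT : T ≤ T') : tSpan K S T ≤ tSpan K S' T' := by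
  simpa only [tSpan_eq_map₂] using map₂_le_map₂ hS hT

theorem tSpan_sup_right (S : Submodule K M) (T T' : Submodule K N) :
    tSpan K S (T ⊔ T') = tSpan K S T ⊔ tSpan K S T' := by
  simp only [tSpan_eq_map₂, map₂_sup_right]

theorem tSpan_top_top : tSpan K (⊤ : Submodule K M) (⊤ : Submodule K N) = ⊤ := by
  rw [tSpan_eq_map₂, map₂_mk_top_top_eq_top]

theorem tSpan_span_span_le {s : Set M} {t : Set N} {U : Submodule K (M ⊗[K] N)} :
    tSpan K (span K s) (span K t) ≤ U ↔ ∀ m ∈ s, ∀ n ∈ t, m ⊗ₜ[K] n ∈ U := by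
  rw [tSpan_eq_map₂, map₂_span_span, span_le, Set.image2_subset_iff]
  rfl

end TensorSpans

section TensorCommutators

variable {K}
variable {F : Type*} [NonUnitalRing F] [Module K F] [SMulCommClass K F F] [IsScalarTower K F F]
variable {A : Type*} [NonUnitalRing A] [Module K A] [SMulCommClass K A A] [IsScalarTower K A A]

theorem tmul_commutator (f f' : F) (a a' : A) :
    f ⊗ₜ[K] a * f' ⊗ₜ[K] a' - f' ⊗ₜ[K] a' * f ⊗ₜ[K] a =
      (f * f' - f' * f) ⊗ₜ[K] (a * a') + (f' * f) ⊗ₜ[K] (a * a' - a' * a) := by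
  simp only [Algebra.TensorProduct.tmul_mul_tmul, sub_tmul, tmul_sub]
  abel

theorem bSpan_tSpan_tSpan_le (S S' : Submodule K F) (T T' : Submodule K A) :
    bSpan K (tSpan K S T) (tSpan K S' T') ≤
      tSpan K (bSpan K S S') (pSpan K T T') ⊔ tSpan K (pSpan K S' S) (bSpan K T T') := by
  refine bSpan_span_span_le.2 ?_
  rintro _ ⟨f, hf, a, ha, rfl⟩ _ ⟨f', hf', a', ha', rfl⟩
  rw [tmul_commutator]
  exact add_mem_sup (tmul_mem_tSpan (commutator_mem_bSpan hf hf') (mul_mem_pSpan ha ha'))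
    (tmul_mem_tSpan (mul_mem_pSpan hf' hf) (commutator_mem_bSpan ha ha'))

theorem tSpan_bSpan_pSpan_le (S S' : Submodule K F) (T T' : Submodule K A) :
    tSpan K (bSpan K S S') (pSpan K T T') ≤
      bSpan K (tSpan K S T) (tSpan K S' T') ⊔ tSpan K (pSpan K S' S) (bSpan K T T') := by
  refine tSpan_span_span_le.2 ?_
  rintro _ ⟨f, hf, f', hf', rfl⟩ _ ⟨a, ha, a', ha', rfl⟩
  rw [← sub_eq_of_eq_add (tmul_commutator f f' a a')]
  exact sub_mem
    (mem_sup_left (commutator_mem_bSpan (tmul_mem_tSpan hf ha) (tmul_mem_tSpan hf' ha')))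
    (mem_sup_right (tmul_mem_tSpan (mul_mem_pSpan hf' hf) (commutator_mem_bSpan ha ha')))

theorem tSpan_pSpan_bSpan_le (S S' : Submodule K F) (T T' : Submodule K A) :
    tSpan K (pSpan K S' S) (bSpan K T T') ≤
      bSpan K (tSpan K S T) (tSpan K S' T') ⊔ tSpan K (bSpan K S S') (pSpan K T T') := by
  refine tSpan_span_span_le.2 ?_
  rintro _ ⟨f', hf', f, hf, rfl⟩ _ ⟨a, ha, a', ha', rfl⟩
  rw [← sub_eq_of_eq_add' (tmul_commutator f f' a a')]
  exact sub_mem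
    (mem_sup_left (commutator_mem_bSpan (tmul_mem_tSpan hf ha) (tmul_mem_tSpan hf' ha')))
    (mem_sup_right (tmul_mem_tSpan (commutator_mem_bSpan hf hf') (mul_mem_pSpan ha ha')))

end TensorCommutators

section CurrentLieAlgebra

variable (F : Type*) [NonUnitalRing F] [Module K F] (A : Type*) [NonUnitalRing A] [Module K A]

/-- The subspace `[F, F] ⊗ A + F·[F, F] ⊗ [A, A]` of `F ⊗ A`, the part of the current Lie algebra
of a pair of type 2 that does not depend on `g`. It is a Lie ideal of `F ⊗ A`
(`bSpan_commutatorIdeal_top_le`), but only a subspace is recorded here. -/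
def commutatorIdeal : Submodule K (F ⊗[K] A) :=
  tSpan K (bSpan K ⊤ ⊤) ⊤ ⊔ tSpan K (pSpan K ⊤ (bSpan K ⊤ ⊤)) (bSpan K ⊤ ⊤)

variable [SMulCommClass K F F] [IsScalarTower K F F] [SMulCommClass K A A] [IsScalarTower K A A]

theorem bSpan_commutatorIdeal_top_le :
    bSpan K (commutatorIdeal K F A) ⊤ ≤ commutatorIdeal K F A := by
  have bSpan_tSpan_top_le {S : Submodule K F}
      (hS : pSpan K ⊤ S ≤ pSpan K ⊤ (bSpan K ⊤ ⊤)) (T : Submodule K A) :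
      bSpan K (tSpan K S T) ⊤ ≤ commutatorIdeal K F A := by
    rw [← tSpan_top_top]
    exact (bSpan_tSpan_tSpan_le S ⊤ T ⊤).trans <|
      sup_le_sup (tSpan_mono (bSpan_mono le_top le_rfl) le_top)
        (tSpan_mono hS (bSpan_mono le_top le_rfl))
  rw [commutatorIdeal, bSpan_sup_left]
  exact sup_le (bSpan_tSpan_top_le le_rfl ⊤)
    (bSpan_tSpan_top_le (pSpan_top_pSpan_top_le _) (bSpan K ⊤ ⊤))

variable {K A}
variable {g : Submodule K A}

theorem lieGen_tSpan_top_le (hg : bSpan K g g ≤ g) :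
    lieGen K (tSpan K (⊤ : Submodule K F) g) ≤ tSpan K ⊤ g ⊔ commutatorIdeal K F A := by
  refine lieGen_le le_sup_left (bSpan_sup_self_le ?_ (bSpan_commutatorIdeal_top_le K F A))
  have bSpan_tSpan_le := bSpan_tSpan_tSpan_le (⊤ : Submodule K F) ⊤ g g
  have tSpan_products_le :
      tSpan K (bSpan K (⊤ : Submodule K F) ⊤) (pSpan K g g) ≤ commutatorIdeal K F A :=
    (tSpan_mono le_rfl le_top).trans le_sup_left
  have tSpan_commutators_le :
      tSpan K (pSpan K (⊤ : Submodule K F) ⊤) (bSpan K g g) ≤ tSpan K ⊤ g :=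
    tSpan_mono le_top hg
  exact bSpan_tSpan_le.trans
    (sup_le (tSpan_products_le.trans le_sup_right) (tSpan_commutators_le.trans le_sup_left))

variable {F}
variable {L : Submodule K (F ⊗[K] A)}

theorem tSpan_bSpan_sup_pSpan_le (hg : bSpan K g g ≤ g) (hL : bSpan K L L ≤ L)
    (hgL : tSpan K ⊤ g ≤ L) : tSpan K (bSpan K ⊤ ⊤) (g ⊔ pSpan K g g) ≤ L := by
  have tSpan_commutators_le : tSpan K (pSpan K (⊤ : Submodule K F) ⊤) (bSpan K g g) ≤ L :=
    (tSpan_mono le_top hg).trans hgL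
  rw [tSpan_sup_right]
  exact sup_le ((tSpan_mono le_top le_rfl).trans hgL) <|
    (tSpan_bSpan_pSpan_le ⊤ ⊤ g g).trans <|
      sup_le ((bSpan_mono hgL hgL).trans hL) tSpan_commutators_le

theorem tSpan_pSpan_bSpan_top_le (hL : bSpan K L L ≤ L) (hgL : tSpan K ⊤ g ≤ L)
    (hFL : tSpan K (bSpan K ⊤ ⊤) ⊤ ≤ L) :
    tSpan K (pSpan K ⊤ (bSpan K ⊤ ⊤)) (bSpan K ⊤ g) ≤ L := by
  have tSpan_commutators_le :
      tSpan K (bSpan K (bSpan K (⊤ : Submodule K F) ⊤) ⊤) (pSpan K ⊤ g) ≤ L :=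
    (tSpan_mono (bSpan_mono le_top le_rfl) le_top).trans hFL
  exact (tSpan_pSpan_bSpan_le (bSpan K ⊤ ⊤) ⊤ ⊤ g).trans <|
    sup_le ((bSpan_mono hFL hgL).trans hL) tSpan_commutators_le

theorem commutatorIdeal_le (hg : bSpan K g g ≤ g) (htype2 : g ⊔ pSpan K g g = ⊤)
    (hL : bSpan K L L ≤ L) (hgL : tSpan K ⊤ g ≤ L) : commutatorIdeal K F A ≤ L := by
  have hFL : tSpan K (bSpan K ⊤ ⊤) ⊤ ≤ L := htype2 ▸ tSpan_bSpan_sup_pSpan_le hg hL hgL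
  have bSpan_top_top : bSpan K (⊤ : Submodule K A) ⊤ = bSpan K ⊤ g := by
    rw [← bSpan_top_sup_pSpan_self g, htype2]
  rw [commutatorIdeal, bSpan_top_top]
  exact sup_le hFL (tSpan_pSpan_bSpan_top_le hL hgL hFL)

end CurrentLieAlgebra

/-- The left-hand side is `currentLie K g` unfolded, since `currentLie` asks for a unital `A`. -/
theorem statement6_general {K : Type*} [Field K]
    {F : Type*} [NonUnitalRing F] [Module K F] [SMulCommClass K F F] [IsScalarTower K F F]
    {A : Type*} [NonUnitalRing A] [Module K A] [SMulCommClass K A A] [IsScalarTower K A A]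
    (g : Submodule K A) (hg : ∀ x ∈ g, ∀ y ∈ g, x * y - y * x ∈ g)
    (htype2 : g ⊔ pSpan K g g = ⊤) :
    lieGen K (tSpan K (⊤ : Submodule K F) g) =
      tSpan K (⊤ : Submodule K F) g ⊔
        tSpan K (bSpan K (⊤ : Submodule K F) ⊤) (⊤ : Submodule K A) ⊔
        tSpan K (pSpan K (⊤ : Submodule K F) (bSpan K ⊤ ⊤))
          (bSpan K (⊤ : Submodule K A) ⊤) := by
  rw [sup_assoc]
  exact le_antisymm (lieGen_tSpan_top_le F (bSpan_le.2 hg))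
    (sup_le (le_lieGen _) <|
      commutatorIdeal_le (bSpan_le.2 hg) htype2 (bSpan_lieGen_le _) (le_lieGen _))

/-- for a compatible pair of type 2,
`(g,A)(F) = F ⊗ g + [F,F] ⊗ A + F·[F,F] ⊗ [A,A]`. -/
theorem statement6 {K : Type*} [Field K] [CharZero K]
    {F : Type*} [NonUnitalRing F] [Module K F] [SMulCommClass K F F] [IsScalarTower K F F]
    {A : Type*} [Ring A] [Algebra K A]
    (g : Submodule K A) (hg : ∀ x ∈ g, ∀ y ∈ g, x * y - y * x ∈ g)
    (hne : g ≠ ⊤) (htype2 : g ⊔ pSpan K g g = ⊤) :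
    currentLie K (F := F) g =
      tSpan K (⊤ : Submodule K F) g ⊔
        tSpan K (bSpan K (⊤ : Submodule K F) ⊤) (⊤ : Submodule K A) ⊔
        tSpan K (pSpan K (⊤ : Submodule K F) (bSpan K ⊤ ⊤))
          (bSpan K (⊤ : Submodule K A) ⊤) :=
  statement6_general g hg htype2
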